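/- arXiv:1302.6330 — 7 statements merged into one kernel-verified Lean document; each statement's English description precedes it below -/
import Mathlib

section
/- For every contract 𝒞, if C and D are both configurations of 𝒞, then C ∪ D is also a configuration of 𝒞. -/
/-- A contract: events `E`, participants `A`, ownership map `pi`, a saturated
fulfillment relation `ok`, a saturated enabling relation `en` (`⊢`) and a
saturated circular enabling relation `cen` (`⊩`). -/
structure Contract (E A : Type) [Fintype E] [Fintype A] where
  pi : E → A
  ok : A → Set E → Prop
  ok_sat : ∀ (a : A) (X Y : Set E), ok a X → X ⊆ Y → ok a Y
  en : Set E → E → Prop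
  en_sat : ∀ (X Y : Set E) (e : E), en X e → X ⊆ Y → en Y e
  cen : Set E → E → Prop
  cen_sat : ∀ (X Y : Set E) (e : E), cen X e → X ⊆ Y → cen Y e

variable {E A : Type} [Fintype E] [Fintype A]

/-- `C` is a configuration iff there is a sequence `e₀,…,eₙ` whose elements are
exactly those of `C`, where each `eᵢ` is either `⊢`-enabled by its predecessors
or `⊩`-enabled by `C` itself. -/
def IsConfig (𝒞 : Contract E A) (C : Set E) : Prop :=
  ∃ l : List E, (∀ e, e ∈ l ↔ e ∈ C) ∧
    ∀ i : Fin l.length, 𝒞.en {e | e ∈ l.take i.1} (l.get i) ∨ 𝒞.cen C (l.get i)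

/-- An event is reachable iff it belongs to some configuration. -/
def Reachable (𝒞 : Contract E A) (e : E) : Prop :=
  ∃ C, IsConfig 𝒞 C ∧ e ∈ C

/-- The union of two configurations is a configuration. -/
theorem union_config (𝒞 : Contract E A) (C D : Set E)
    (hC : IsConfig 𝒞 C) (hD : IsConfig 𝒞 D) : IsConfig 𝒞 (C ∪ D) := by
  obtain ⟨l, hl, h1⟩ := hC
  obtain ⟨m, hm, h2⟩ := hD
  refine ⟨l ++ m, fun e => by simp [hl, hm], ?_⟩
  rintro ⟨i, hi⟩
  by_cases h : i < l.length
  · have := h1 ⟨i, h⟩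
    simp only [List.get_eq_getElem, List.getElem_append_left h] at this ⊢
    rcases this with h' | h'
    · left
      refine 𝒞.en_sat _ _ _ h' ?_
      intro e he
      simp only [Set.mem_setOf_eq, List.take_append, List.mem_append] at he ⊢
      exact Or.inl he
    · exact Or.inr (𝒞.cen_sat _ _ _ h' Set.subset_union_left)
  · have hi' : i - l.length < m.length := by
      simp only [List.length_append] at hi
      omega
    have := h2 ⟨i - l.length, hi'⟩
    simp only [List.get_eq_getElem, List.getElem_append_right (not_lt.mp h)] at this ⊢
    rcases this with h' | h'
    · left
      refine 𝒞.en_sat _ _ _ h' ?_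
      intro e he
      simp only [Set.mem_setOf_eq, List.take_append, List.mem_append] at he ⊢
      exact Or.inr he
    · exact Or.inr (𝒞.cen_sat _ _ _ h' Set.subset_union_right)
end

section
/- For every contract 𝒞, if C is a configuration of 𝒞 and e is an event such that C ⊢ e or C ⊩ e, then C ∪ {e} is also a configuration of 𝒞. -/
variable {E A : Type} [Fintype E] [Fintype A]

/-- If `C` is a configuration and `C ⊢ e` or `C ⊩ e`, then `C ∪ {e}` is a
configuration. -/
theorem config_insert (𝒞 : Contract E A) (C : Set E) (e : E)
    (hC : IsConfig 𝒞 C) (h : 𝒞.en C e ∨ 𝒞.cen C e) :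
    IsConfig 𝒞 (C ∪ {e}) := by
  obtain ⟨l, hl, hen⟩ := hC
  have hCl : {x | x ∈ l} = C := Set.ext hl
  refine ⟨l ++ [e], ?_, ?_⟩
  · intro x
    simp [hl, or_comm]
  · rintro ⟨i, hi⟩
    by_cases hlt : i < l.length
    · have h1 : (l ++ [e]).get ⟨i, hi⟩ = l.get ⟨i, hlt⟩ := by
        simp [List.getElem_append_left hlt]
      have h2 : (l ++ [e]).take i = l.take i :=
        List.take_append_of_le_length hlt.le
      rw [h1]
      simp only [h2]
      exact (hen ⟨i, hlt⟩).imp id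
        (fun hc => 𝒞.cen_sat _ _ _ hc Set.subset_union_left)
    · have hi' : i = l.length := by
        simp at hi
        omega
      subst hi'
      have h1 : (l ++ [e]).get ⟨l.length, hi⟩ = e := by simp
      have h2 : (l ++ [e]).take l.length = l := by simp
      rw [h1]
      simp only [h2, hCl]
      exact h.imp id (fun hc => 𝒞.cen_sat _ _ _ hc Set.subset_union_left)
end

section
/- For every contract 𝒞, the set C = { e ∈ E : e is reachable } of all reachable events is a configuration of 𝒞, and it is the greatest configuration: every configuration C' of 𝒞 satisfies C' ⊆ C. -/
variable {E A : Type} [Fintype E] [Fintype A]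

theorem reach_aux (𝒞 : Contract E A) (s : List E) :
    ∃ l : List E, (∀ e ∈ l, Reachable 𝒞 e) ∧ (∀ e ∈ s, Reachable 𝒞 e → e ∈ l) ∧
      ∀ (i : ℕ) (h : i < l.length), 𝒞.en {e | e ∈ l.take i} l[i] ∨
        𝒞.cen {e | Reachable 𝒞 e} l[i] := by
  induction s with
  | nil => exact ⟨[], by simp, by simp, by simp⟩
  | cons a s ih =>
    obtain ⟨l, h1, h2, h3⟩ := ih
    by_cases ha : Reachable 𝒞 a
    · obtain ⟨C, ⟨m, hm, hs⟩, haC⟩ := id ha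
      have hCR : C ⊆ {e | Reachable 𝒞 e} := fun e he => ⟨C, ⟨m, hm, hs⟩, he⟩
      refine ⟨l ++ m, ?_, ?_, ?_⟩
      · intro e he
        rcases List.mem_append.1 he with he | he
        · exact h1 e he
        · exact hCR ((hm e).1 he)
      · intro e he hr
        rcases List.mem_cons.1 he with rfl | he
        · exact List.mem_append_right _ ((hm e).2 haC)
        · exact List.mem_append_left _ (h2 e he hr)
      · intro i hi
        by_cases hil : i < l.length
        · rw [List.getElem_append_left hil, List.take_append_of_le_length hil.le]
          exact h3 i hil
        · push Not at hil
          have him : i - l.length < m.length := by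
            rw [List.length_append] at hi
            omega
          rw [List.getElem_append_right hil, List.take_append]
          rcases hs ⟨i - l.length, him⟩ with h | h
          · exact Or.inl (𝒞.en_sat _ _ _ h fun e he => List.mem_append_right _ he)
          · exact Or.inr (𝒞.cen_sat _ _ _ h hCR)
    · refine ⟨l, h1, ?_, h3⟩
      intro e he hr
      rcases List.mem_cons.1 he with rfl | he
      · exact absurd hr ha
      · exact h2 e he hr

/-- The set of all reachable events is a configuration, and it is the greatest
one. -/
theorem reachable_set_greatest_config (𝒞 : Contract E A) :
    IsConfig 𝒞 {e | Reachable 𝒞 e} ∧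
      ∀ C', IsConfig 𝒞 C' → C' ⊆ {e | Reachable 𝒞 e} := by
  refine ⟨?_, fun C' hC' e he => ⟨C', hC', he⟩⟩
  obtain ⟨l, h1, h2, h3⟩ := reach_aux 𝒞 (Finset.univ : Finset E).toList
  exact ⟨l, fun e => ⟨h1 e, h2 e (by simp)⟩, fun i => h3 i.1 i.2⟩
end

section
/- For every contract 𝒞: if an agreement on 𝒞 exists, then for every participant A ∈ 𝒜 and every state X ⊆ E, either ok(A,X) holds, or some participant is culpable in X. -/
variable {E A : Type} [Fintype E] [Fintype A]

/-- An agreement: a configuration in which every participant is satisfied. -/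
def Agreement (𝒞 : Contract E A) (C : Set E) : Prop :=
  IsConfig 𝒞 C ∧ ∀ a : A, 𝒞.ok a C

/-- The duties of participant `a` in state `X`: events `e ∉ X` of `a`, belonging
to some configuration `C`, such that either `X ⊢ e`, or no event of `C ∖ X` is
`⊢`-enabled by `X` and `e` is `⊩`-enabled by some `D ⊆ C ∪ X`. -/
def Duties (𝒞 : Contract E A) (a : A) (X : Set E) : Set E :=
  {e | e ∉ X ∧ 𝒞.pi e = a ∧ ∃ C, IsConfig 𝒞 C ∧ e ∈ C ∧
    (𝒞.en X e ∨ ((¬ ∃ e' ∈ C \ X, 𝒞.en X e') ∧ ∃ D ⊆ C ∪ X, 𝒞.cen D e))}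

/-- A participant is culpable in `X` iff she has some duties in `X`. -/
def Culpable (𝒞 : Contract E A) (a : A) (X : Set E) : Prop :=
  (Duties 𝒞 a X).Nonempty

/-- If an agreement exists then, in every state, every participant is either
satisfied or someone is culpable. -/
theorem ok_or_culpable (𝒞 : Contract E A) (h : ∃ C, Agreement 𝒞 C) :
    ∀ (a : A) (X : Set E), 𝒞.ok a X ∨ ∃ b : A, Culpable 𝒞 b X := by
  intro a X
  classical
  obtain ⟨C, hC, hok⟩ := h
  by_cases hX : C ⊆ X
  · exact Or.inl (𝒞.ok_sat a C X (hok a) hX)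
  right
  by_cases hen : ∃ e' ∈ C \ X, 𝒞.en X e'
  · obtain ⟨e', ⟨h1, h2⟩, h3⟩ := hen
    exact ⟨𝒞.pi e', e', h2, rfl, C, hC, h1, Or.inl h3⟩
  have hC' := hC
  obtain ⟨l, hl, hs⟩ := hC'
  have hex : ∃ i, ∃ hi : i < l.length, l[i] ∉ X := by
    obtain ⟨e, he, heX⟩ := Set.not_subset.1 hX
    obtain ⟨i, hi, rfl⟩ := List.getElem_of_mem ((hl e).2 he)
    exact ⟨i, hi, heX⟩
  obtain ⟨hi, hiX⟩ := Nat.find_spec hex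
  have hmin := fun m => Nat.find_min hex (m := m)
  generalize Nat.find hex = i at hi hiX hmin
  have hmem : l[i] ∈ C := (hl _).1 (List.getElem_mem hi)
  refine ⟨𝒞.pi l[i], l[i], hiX, rfl, C, hC, hmem, ?_⟩
  rcases hs ⟨i, hi⟩ with h1 | h1
  · left
    refine 𝒞.en_sat _ _ _ h1 ?_
    intro e he
    obtain ⟨j, hj, rfl⟩ := List.getElem_of_mem (show e ∈ l.take i from he)
    by_contra hc
    rw [List.getElem_take] at hc
    have hj' := hj
    rw [List.length_take] at hj'
    exact hmin j (by omega) ⟨by omega, hc⟩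
  · exact Or.inr ⟨hen, C, Set.subset_union_left, h1⟩
end

section
/- For every contract 𝒞 and every event e ∈ E: e is reachable in 𝒞 if and only if [𝒞] ⊢_PCL π(e) says e, where [𝒞] is the PCL encoding of 𝒞. -/
variable {E A : Type} [Fintype E] [Fintype A]

/-- Formulae of PCL: intuitionistic logic plus contractual implication `cimp`
(`↠`) and the indexed modality `says`. Atoms are events in `E`. -/
inductive PCLFormula (E A : Type) where
  | top : PCLFormula E A
  | bot : PCLFormula E A
  | atom : E → PCLFormula E A
  | and : PCLFormula E A → PCLFormula E A → PCLFormula E A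
  | or : PCLFormula E A → PCLFormula E A → PCLFormula E A
  | imp : PCLFormula E A → PCLFormula E A → PCLFormula E A
  | cimp : PCLFormula E A → PCLFormula E A → PCLFormula E A
  | says : A → PCLFormula E A → PCLFormula E A

/-- Hilbert-style provability for PCL: an intuitionistic base (axioms plus
modus ponens) extended with the axioms for `↠` and `says`. `PCLProof Γ φ`
formalises `Γ ⊢_PCL φ`. -/
inductive PCLProof {E A : Type} (Γ : Set (PCLFormula E A)) : PCLFormula E A → Prop
  | hyp {φ} : φ ∈ Γ → PCLProof Γ φ
  | mp {φ ψ} : PCLProof Γ (.imp φ ψ) → PCLProof Γ φ → PCLProof Γ ψ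
  | axK {φ ψ} : PCLProof Γ (.imp φ (.imp ψ φ))
  | axS {φ ψ χ} :
      PCLProof Γ (.imp (.imp φ (.imp ψ χ)) (.imp (.imp φ ψ) (.imp φ χ)))
  | axTop : PCLProof Γ .top
  | axBot {φ} : PCLProof Γ (.imp .bot φ)
  | axAndI {φ ψ} : PCLProof Γ (.imp φ (.imp ψ (.and φ ψ)))
  | axAndE1 {φ ψ} : PCLProof Γ (.imp (.and φ ψ) φ)
  | axAndE2 {φ ψ} : PCLProof Γ (.imp (.and φ ψ) ψ)
  | axOrI1 {φ ψ} : PCLProof Γ (.imp φ (.or φ ψ))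
  | axOrI2 {φ ψ} : PCLProof Γ (.imp ψ (.or φ ψ))
  | axOrE {φ ψ χ} :
      PCLProof Γ (.imp (.imp φ χ) (.imp (.imp ψ χ) (.imp (.or φ ψ) χ)))
  | axCTop : PCLProof Γ (.cimp .top .top)
  | axCFix {φ} : PCLProof Γ (.imp (.cimp φ φ) φ)
  | axCPrePost {φ φ' ψ ψ'} :
      PCLProof Γ (.imp (.imp φ' φ)
        (.imp (.cimp φ ψ) (.imp (.imp ψ ψ') (.cimp φ' ψ'))))
  | axSaysI {a φ} : PCLProof Γ (.imp φ (.says a φ))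
  | axSaysIdem {a φ} : PCLProof Γ (.imp (.says a (.says a φ)) (.says a φ))
  | axSaysMono {a φ ψ} :
      PCLProof Γ (.imp (.imp φ ψ) (.imp (.says a φ) (.says a ψ)))

/-- The conjunction `⋀_{d ∈ D} (pi d) says d`. -/
noncomputable def conjSays (𝒞 : Contract E A) (D : Set E) : PCLFormula E A :=
  ((Set.toFinite D).toFinset.toList.map
    (fun d => PCLFormula.says (𝒞.pi d) (.atom d))).foldr PCLFormula.and .top

/-- The PCL encoding `[𝒞]` of a contract, as the set of the encodings
`π(a) says ((⋀_{d∈D} π(d) says d) [∘] a)` of all its enablings. -/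
noncomputable def encodeContract (𝒞 : Contract E A) : Set (PCLFormula E A) :=
  {f | ∃ D e, 𝒞.en D e ∧
        f = .says (𝒞.pi e) (.imp (conjSays 𝒞 D) (.atom e))} ∪
  {f | ∃ D e, 𝒞.cen D e ∧
        f = .says (𝒞.pi e) (.cimp (conjSays 𝒞 D) (.atom e))}


theorem PCLProof.mono {E A : Type} {Γ Δ : Set (PCLFormula E A)} (h : Γ ⊆ Δ) {φ : PCLFormula E A}
    (p : PCLProof Γ φ) : PCLProof Δ φ := by
  induction p with
  | hyp hm => exact .hyp (h hm)
  | mp _ _ ih1 ih2 => exact .mp ih1 ih2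
  | axK => exact .axK
  | axS => exact .axS
  | axTop => exact .axTop
  | axBot => exact .axBot
  | axAndI => exact .axAndI
  | axAndE1 => exact .axAndE1
  | axAndE2 => exact .axAndE2
  | axOrI1 => exact .axOrI1
  | axOrI2 => exact .axOrI2
  | axOrE => exact .axOrE
  | axCTop => exact .axCTop
  | axCFix => exact .axCFix
  | axCPrePost => exact .axCPrePost
  | axSaysI => exact .axSaysI
  | axSaysIdem => exact .axSaysIdem
  | axSaysMono => exact .axSaysMono

theorem PCLProof.ded {E A : Type} {Γ : Set (PCLFormula E A)} {φ ψ : PCLFormula E A}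
    (p : PCLProof (insert φ Γ) ψ) : PCLProof Γ (.imp φ ψ) := by
  induction p with
  | hyp hm =>
    rcases hm with rfl | hm
    · exact .mp (.mp .axS .axK) (.axK (ψ := .top))
    · exact .mp .axK (.hyp hm)
  | mp _ _ ih1 ih2 => exact .mp (.mp .axS ih1) ih2
  | axK => exact .mp .axK .axK
  | axS => exact .mp .axK .axS
  | axTop => exact .mp .axK .axTop
  | axBot => exact .mp .axK .axBot
  | axAndI => exact .mp .axK .axAndI
  | axAndE1 => exact .mp .axK .axAndE1
  | axAndE2 => exact .mp .axK .axAndE2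
  | axOrI1 => exact .mp .axK .axOrI1
  | axOrI2 => exact .mp .axK .axOrI2
  | axOrE => exact .mp .axK .axOrE
  | axCTop => exact .mp .axK .axCTop
  | axCFix => exact .mp .axK .axCFix
  | axCPrePost => exact .mp .axK .axCPrePost
  | axSaysI => exact .mp .axK .axSaysI
  | axSaysIdem => exact .mp .axK .axSaysIdem
  | axSaysMono => exact .mp .axK .axSaysMono

theorem PCLProof.bind {E A : Type} {Γ : Set (PCLFormula E A)} {a : A} {φ ψ : PCLFormula E A}
    (p : PCLProof Γ (.says a φ)) (q : PCLProof (insert φ Γ) (.says a ψ)) :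
    PCLProof Γ (.says a ψ) :=
  .mp .axSaysIdem (.mp (.mp .axSaysMono q.ded) p)

theorem PCLProof.fix {E A : Type} {Γ : Set (PCLFormula E A)} {φ ψ χ : PCLFormula E A}
    (p : PCLProof Γ (.cimp φ ψ)) (q : PCLProof (insert χ Γ) φ) (r : PCLProof Γ (.imp ψ χ)) :
    PCLProof Γ χ :=
  .mp .axCFix (.mp (.mp (.mp .axCPrePost q.ded) p) r)

theorem proof_foldr {E A : Type} {Γ : Set (PCLFormula E A)} (l : List (PCLFormula E A))
    (h : ∀ φ ∈ l, PCLProof Γ φ) : PCLProof Γ (l.foldr PCLFormula.and .top) := by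
  induction l with
  | nil => exact .axTop
  | cons x l ih =>
    exact .mp (.mp .axAndI (h x (by simp))) (ih fun φ hφ => h φ (by simp [hφ]))

theorem proof_conj (𝒞 : Contract E A) {Γ : Set (PCLFormula E A)} (D : Set E)
    (h : ∀ d ∈ D, PCLProof Γ (.says (𝒞.pi d) (.atom d))) : PCLProof Γ (conjSays 𝒞 D) := by
  apply proof_foldr
  intro φ hφ
  simp only [List.mem_map, Finset.mem_toList, Set.Finite.mem_toFinset] at hφ
  obtain ⟨d, hd, rfl⟩ := hφ
  exact h d hd

/-- the encoding with extra assumed facts -/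
def encPlus (𝒞 : Contract E A) (S : Set E) : Set (PCLFormula E A) :=
  encodeContract 𝒞 ∪ (fun x => PCLFormula.says (𝒞.pi x) (.atom x)) '' S

theorem config_proof (𝒞 : Contract E A) (C : Set E) (l : List E) (hl : ∀ e, e ∈ l ↔ e ∈ C)
    (hc : ∀ i : Fin l.length, 𝒞.en {e | e ∈ l.take i.1} (l.get i) ∨ 𝒞.cen C (l.get i)) (S : Set E) :
    ∀ e ∈ C, PCLProof (encPlus 𝒞 S) (.says (𝒞.pi e) (.atom e)) := by
  induction S using WellFoundedGT.induction with
  | ind S IH =>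
  have key : ∀ n (hn : n < l.length),
      PCLProof (encPlus 𝒞 S) (.says (𝒞.pi l[n]) (.atom l[n])) := by
    intro n
    induction n using Nat.strong_induction_on with
    | _ n ih =>
    intro hn
    by_cases hS : l[n] ∈ S
    · exact .hyp (Or.inr ⟨_, hS, rfl⟩)
    rcases hc ⟨n, hn⟩ with h | h
    · refine PCLProof.bind (.hyp (Or.inl (Or.inl ⟨_, _, h, rfl⟩))) ?_
      refine .mp .axSaysI (.mp (.hyp (Or.inl rfl)) ?_)
      refine proof_conj 𝒞 _ ?_
      intro d hd
      obtain ⟨i, hi, rfl⟩ := List.mem_iff_getElem.1 hd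
      have hi' : i < n ∧ i < l.length := by simpa using hi
      rw [List.getElem_take]
      exact (ih i hi'.1 hi'.2).mono (Set.subset_insert _ _)
    · refine PCLProof.bind (.hyp (Or.inl (Or.inr ⟨_, _, h, rfl⟩))) ?_
      refine PCLProof.fix (.hyp (Or.inl rfl)) ?_ .axSaysI
      refine proof_conj 𝒞 _ ?_
      intro d hd
      refine (IH (insert l[n] S) (Set.ssubset_insert hS) d hd).mono ?_
      rintro φ (h | ⟨x, rfl | hx, rfl⟩)
      · exact Or.inr (Or.inr (Or.inl h))
      · exact Or.inl rfl
      · exact Or.inr (Or.inr (Or.inr ⟨x, hx, rfl⟩))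
  intro e he
  obtain ⟨n, hn, rfl⟩ := List.mem_iff_getElem.1 ((hl e).2 he)
  exact key n hn

/-- derivability from facts `X` with circular context `C` -/
inductive Dr (𝒞 : Contract E A) (X C : Set E) : E → Prop
  | base {e} : e ∈ X → Dr 𝒞 X C e
  | en {D e} : 𝒞.en D e → (∀ d ∈ D, Dr 𝒞 X C d) → Dr 𝒞 X C e
  | cen {e} : 𝒞.cen C e → Dr 𝒞 X C e

theorem Dr.mono {𝒞 : Contract E A} {X C X' C' : Set E} (hX : ∀ x ∈ X, Dr 𝒞 X' C' x) (hC : C ⊆ C')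
    {e : E} (h : Dr 𝒞 X C e) : Dr 𝒞 X' C' e := by
  induction h with
  | base h => exact hX _ h
  | en h _ ih => exact .en h ih
  | cen h => exact .cen (𝒞.cen_sat _ _ _ h hC)

/-- events reachable from facts `X` -/
def Cl (𝒞 : Contract E A) (X : Set E) : Set E :=
  {e | ∃ C, (∀ c ∈ C, Dr 𝒞 X C c) ∧ e ∈ C}

theorem Cl.dr {𝒞 : Contract E A} {X : Set E} : ∀ e ∈ Cl 𝒞 X, Dr 𝒞 X (Cl 𝒞 X) e := by
  rintro e ⟨C, hC, he⟩
  exact (hC e he).mono (fun x hx => .base hx) (fun c hc => show ∃ C, _ from ⟨C, hC, hc⟩)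

theorem Cl.of_sub {𝒞 : Contract E A} {X C : Set E} (h : ∀ c ∈ C, Dr 𝒞 X C c) : C ⊆ Cl 𝒞 X :=
  fun _ hc => ⟨C, h, hc⟩

theorem Cl.of_dr {𝒞 : Contract E A} {X : Set E} {e : E} (h : Dr 𝒞 X (Cl 𝒞 X) e) :
    e ∈ Cl 𝒞 X := by
  refine Cl.of_sub (C := insert e (Cl 𝒞 X)) ?_ (Or.inl rfl)
  rintro c (rfl | hc)
  · exact h.mono (fun x hx => .base hx) (Set.subset_insert _ _)
  · exact (Cl.dr c hc).mono (fun x hx => .base hx) (Set.subset_insert _ _)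

theorem Cl.mono {𝒞 : Contract E A} {X Y : Set E} (h : X ⊆ Y) : Cl 𝒞 X ⊆ Cl 𝒞 Y :=
  Cl.of_sub fun c hc => (Cl.dr c hc).mono (fun _ hx => .base (h hx)) subset_rfl

theorem Cl.circ {𝒞 : Contract E A} {X D : Set E} {e : E} (h : 𝒞.cen D e)
    (hD : D ⊆ Cl 𝒞 (insert e X)) : e ∈ Cl 𝒞 X := by
  have he : Dr 𝒞 X (Cl 𝒞 (insert e X)) e := .cen (𝒞.cen_sat _ _ _ h hD)
  refine Cl.of_sub (C := Cl 𝒞 (insert e X)) ?_ (Cl.of_dr (.base (Or.inl rfl)))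
  intro c hc
  refine (Cl.dr c hc).mono ?_ subset_rfl
  rintro x (rfl | hx)
  · exact he
  · exact .base hx

/-- Kripke semantics -/
def Force (𝒞 : Contract E A) : PCLFormula E A → Set E → Prop
  | .top, _ => True
  | .bot, _ => False
  | .atom e, X => e ∈ Cl 𝒞 X
  | .and φ ψ, X => Force 𝒞 φ X ∧ Force 𝒞 ψ X
  | .or φ ψ, X => Force 𝒞 φ X ∨ Force 𝒞 ψ X
  | .imp φ ψ, X => ∀ Y, X ⊆ Y → Force 𝒞 φ Y → Force 𝒞 ψ Y
  | .cimp φ ψ, X => ∀ r : Set E → Prop, (∀ Y Z, Y ⊆ Z → r Y → r Z) → ∀ Y, X ⊆ Y →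
      (∀ Z, Y ⊆ Z → r Z → Force 𝒞 φ Z) → (∀ Z, Y ⊆ Z → Force 𝒞 ψ Z → r Z) → r Y
  | .says _ φ, X => Force 𝒞 φ X

theorem Force.mono {𝒞 : Contract E A} (φ : PCLFormula E A) : ∀ X Y : Set E, X ⊆ Y →
    Force 𝒞 φ X → Force 𝒞 φ Y := by
  induction φ with
  | top => exact fun _ _ _ h => h
  | bot => exact fun _ _ _ h => h
  | atom e => exact fun _ _ h he => Cl.mono h he
  | and φ ψ i1 i2 => exact fun X Y h hf => ⟨i1 X Y h hf.1, i2 X Y h hf.2⟩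
  | or φ ψ i1 i2 => exact fun X Y h hf => hf.imp (i1 X Y h) (i2 X Y h)
  | imp φ ψ _ _ => exact fun X Y h hf Z hZ => hf Z (h.trans hZ)
  | cimp φ ψ _ _ => exact fun X Y h hf r hr Z hZ => hf r hr Z (h.trans hZ)
  | _ a φ ih => exact ih

theorem Force.sound {𝒞 : Contract E A} {Γ : Set (PCLFormula E A)}
    (hΓ : ∀ φ ∈ Γ, ∀ X, Force 𝒞 φ X) {φ : PCLFormula E A} (p : PCLProof Γ φ) :
    ∀ X, Force 𝒞 φ X := by
  induction p with
  | hyp hm => exact hΓ _ hm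
  | mp _ _ ih1 ih2 => exact fun X => ih1 X X subset_rfl (ih2 X)
  | axK => exact fun X Y _ h Z hZ _ => Force.mono _ Y Z hZ h
  | axS =>
    exact fun X Y _ h Z hZ h2 W hW h3 =>
      h W (hZ.trans hW) h3 W subset_rfl (h2 W hW h3)
  | axTop => exact fun _ => trivial
  | axBot => exact fun _ _ _ h => h.elim
  | axAndI => exact fun X Y _ h Z hZ h2 => ⟨Force.mono _ Y Z hZ h, h2⟩
  | axAndE1 => exact fun X Y _ h => h.1
  | axAndE2 => exact fun X Y _ h => h.2
  | axOrI1 => exact fun X Y _ h => Or.inl h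
  | axOrI2 => exact fun X Y _ h => Or.inr h
  | axOrE =>
    exact fun X Y _ h Z hZ h2 W hW h3 =>
      h3.elim (h W (hZ.trans hW)) (h2 W hW)
  | axCTop => exact fun X r _ Y _ _ h => h Y subset_rfl trivial
  | @axCFix φ =>
    exact fun X Y _ h => h (Force 𝒞 φ) (Force.mono φ) Y subset_rfl
      (fun _ _ h => h) (fun _ _ h => h)
  | axCPrePost =>
    exact fun X Y _ h Z hZ h2 W hW h3 r hr V hV h4 h5 =>
      h2 r hr V (hW.trans hV)
        (fun U hU hrU => h U (hZ.trans (hW.trans (hV.trans hU))) (h4 U hU hrU))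
        (fun U hU hU' => h5 U hU (h3 U (hV.trans hU) hU'))
  | axSaysI => exact fun X Y _ h => h
  | axSaysIdem => exact fun X Y _ h => h
  | axSaysMono => exact fun X Y _ h => h

theorem force_foldr {𝒞 : Contract E A} {X : Set E} (l : List (PCLFormula E A))
    (h : Force 𝒞 (l.foldr PCLFormula.and .top) X) : ∀ φ ∈ l, Force 𝒞 φ X := by
  induction l with
  | nil => simp
  | cons x l ih =>
    intro φ hφ
    rcases List.mem_cons.1 hφ with rfl | hφ
    · exact h.1
    · exact ih h.2 φ hφ

theorem force_conj {𝒞 : Contract E A} {X D : Set E}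
    (h : Force 𝒞 (conjSays 𝒞 D) X) : D ⊆ Cl 𝒞 X := by
  intro d hd
  refine force_foldr _ h (.says (𝒞.pi d) (.atom d)) ?_
  simp only [List.mem_map, Finset.mem_toList, Set.Finite.mem_toFinset]
  exact ⟨d, hd, rfl⟩

theorem force_enc {𝒞 : Contract E A} : ∀ φ ∈ encodeContract 𝒞, ∀ X, Force 𝒞 φ X := by
  rintro φ (⟨D, e, h, rfl⟩ | ⟨D, e, h, rfl⟩) X
  · intro Y _ hY
    exact Cl.of_dr (.en h fun d hd => Cl.dr d (force_conj hY hd))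
  · intro r hr Y _ h1 h2
    refine h2 Y subset_rfl ?_
    refine Cl.circ h (force_conj (h1 (insert e Y) (Set.subset_insert _ _) ?_))
    exact h2 _ (Set.subset_insert _ _) (Cl.of_dr (.base (Or.inl rfl)))

/-- justified sequences -/
def GoodSeq (𝒞 : Contract E A) (C : Set E) (l : List E) : Prop :=
  ∀ p x q, l = p ++ x :: q → 𝒞.en {e | e ∈ p} x ∨ 𝒞.cen C x

theorem GoodSeq.append {𝒞 : Contract E A} {C : Set E} {l m : List E} (hl : GoodSeq 𝒞 C l)
    (hm : GoodSeq 𝒞 C m) : GoodSeq 𝒞 C (l ++ m) := by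
  intro p x q h
  rcases List.append_eq_append_iff.1 h with ⟨a, rfl, h2⟩ | ⟨a, h1, h2⟩
  · refine (hm _ _ _ h2).imp_left fun h => 𝒞.en_sat _ _ _ h ?_
    intro y hy
    simp only [Set.mem_ofPred_eq, List.mem_append] at hy ⊢
    exact Or.inr hy
  · cases a with
    | nil =>
      simp only [List.append_nil, List.nil_append] at h1 h2
      refine (hm [] x q h2.symm).imp_left fun h => 𝒞.en_sat _ _ _ h ?_
      intro y hy
      simp at hy
    | cons y a =>
      simp only [List.cons_append, List.cons.injEq] at h2
      obtain ⟨rfl, _⟩ := h2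
      exact hl _ _ _ h1

theorem good_gather {𝒞 : Contract E A} {C : Set E} (s : List E)
    (h : ∀ e ∈ s, ∃ l, GoodSeq 𝒞 C l ∧ (∀ x ∈ l, Dr 𝒞 ∅ C x) ∧ e ∈ l) :
    ∃ l, GoodSeq 𝒞 C l ∧ (∀ x ∈ l, Dr 𝒞 ∅ C x) ∧ ∀ e ∈ s, e ∈ l := by
  induction s with
  | nil => exact ⟨[], fun p x q h => by simp at h, by simp, by simp⟩
  | cons a s ih =>
    obtain ⟨l, h1, h2, h3⟩ := h a (by simp)
    obtain ⟨m, k1, k2, k3⟩ := ih fun e he => h e (by simp [he])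
    refine ⟨l ++ m, h1.append k1, ?_, ?_⟩
    · intro x hx
      exact (List.mem_append.1 hx).elim (h2 x) (k2 x)
    · intro e he
      rcases List.mem_cons.1 he with rfl | he
      · exact List.mem_append.2 (Or.inl h3)
      · exact List.mem_append.2 (Or.inr (k3 e he))

theorem good_of_dr {𝒞 : Contract E A} {C : Set E} {e : E} (h : Dr 𝒞 ∅ C e) :
    ∃ l, GoodSeq 𝒞 C l ∧ (∀ x ∈ l, Dr 𝒞 ∅ C x) ∧ e ∈ l := by
  have single : ∀ (m : List E) (e : E), 𝒞.en {x | x ∈ m} e ∨ 𝒞.cen C e → GoodSeq 𝒞 C m →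
      GoodSeq 𝒞 C (m ++ [e]) := by
    intro m e he hm p x q h
    rcases List.eq_nil_or_concat q with rfl | ⟨q', b, rfl⟩
    · obtain ⟨rfl, h2⟩ := List.append_inj' h rfl
      simp only [List.cons.injEq, and_true] at h2
      exact h2 ▸ he
    · rw [List.concat_eq_append, ← List.cons_append, ← List.append_assoc] at h
      exact hm _ _ _ (List.append_inj' h rfl).1
  induction h with
  | base h => exact absurd h (by simp)
  | @en D e h hd ih =>
    obtain ⟨l, h1, h2, h3⟩ := good_gather (Set.toFinite D).toFinset.toList
      (fun d hd => ih d (by simpa using hd))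
    refine ⟨l ++ [e], single l e (Or.inl (𝒞.en_sat _ _ _ h ?_)) h1, ?_, by simp⟩
    · intro d hd
      exact h3 d (by simpa using hd)
    · intro x hx
      rcases List.mem_append.1 hx with hx | hx
      · exact h2 x hx
      · rw [List.mem_singleton.1 hx]
        exact .en h hd
  | @cen e h =>
    refine ⟨[] ++ [e], single [] e (Or.inr h) (fun p x q h => by simp at h), ?_, by simp⟩
    intro x hx
    rw [List.mem_singleton.1 hx]
    exact .cen h

theorem cl_config (𝒞 : Contract E A) : IsConfig 𝒞 (Cl 𝒞 ∅) := by
  obtain ⟨l, h1, h2, h3⟩ := good_gather (𝒞 := 𝒞) (C := Cl 𝒞 ∅)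
    (Set.toFinite (Cl 𝒞 ∅)).toFinset.toList
    (fun d hd => good_of_dr (Cl.dr d (by simpa using hd)))
  refine ⟨l, fun e => ⟨fun he => Cl.of_dr (h2 e he), fun he => h3 e (by simpa using he)⟩, ?_⟩
  intro i
  refine h1 _ _ (l.drop (i.1 + 1)) ?_
  simp

/-- An event is reachable iff `[𝒞] ⊢_PCL π(e) says e`. -/
theorem reachable_iff_pcl_provable (𝒞 : Contract E A) (e : E) :
    Reachable 𝒞 e ↔
      PCLProof (encodeContract 𝒞) (.says (𝒞.pi e) (.atom e)) := by
  constructor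
  · rintro ⟨C, ⟨l, hl, hc⟩, he⟩
    refine (config_proof 𝒞 C l hl hc ∅ e he).mono ?_
    simp [encPlus]
  · intro p
    exact ⟨_, cl_config 𝒞, Force.sound force_enc p ∅⟩
end

section
/- A contract 𝒞 admits an agreement if and only if for every participant A ∈ 𝒜 there exists a set G ⊆ E such that ok(A,G) and, for every e ∈ G, [𝒞] ⊢_PCL π(e) says e. -/
variable {E A : Type} [Fintype E] [Fintype A]

theorem pcl_imp_self {E A : Type} {Γ : Set (PCLFormula E A)} {φ : PCLFormula E A} :
    PCLProof Γ (.imp φ φ) :=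
  .mp (.mp (.axS (ψ := .imp φ φ)) .axK) .axK

theorem pcl_deduction {E A : Type} {Γ : Set (PCLFormula E A)} {φ ψ : PCLFormula E A}
    (h : PCLProof (insert φ Γ) ψ) : PCLProof Γ (.imp φ ψ) := by
  induction h with
  | hyp h =>
    rcases h with rfl | h
    · exact pcl_imp_self
    · exact .mp .axK (.hyp h)
  | mp _ _ h1 h2 => exact .mp (.mp .axS h1) h2
  | axK => exact .mp .axK .axK
  | axS => exact .mp .axK .axS
  | axTop => exact .mp .axK .axTop
  | axBot => exact .mp .axK .axBot
  | axAndI => exact .mp .axK .axAndI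
  | axAndE1 => exact .mp .axK .axAndE1
  | axAndE2 => exact .mp .axK .axAndE2
  | axOrI1 => exact .mp .axK .axOrI1
  | axOrI2 => exact .mp .axK .axOrI2
  | axOrE => exact .mp .axK .axOrE
  | axCTop => exact .mp .axK .axCTop
  | axCFix => exact .mp .axK .axCFix
  | axCPrePost => exact .mp .axK .axCPrePost
  | axSaysI => exact .mp .axK .axSaysI
  | axSaysIdem => exact .mp .axK .axSaysIdem
  | axSaysMono => exact .mp .axK .axSaysMono

theorem pcl_weaken {E A : Type} {Γ Δ : Set (PCLFormula E A)} (hs : Γ ⊆ Δ) {ψ : PCLFormula E A}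
    (h : PCLProof Γ ψ) : PCLProof Δ ψ := by
  induction h with
  | hyp h => exact .hyp (hs h)
  | mp _ _ h1 h2 => exact .mp h1 h2
  | axK => exact .axK
  | axS => exact .axS
  | axTop => exact .axTop
  | axBot => exact .axBot
  | axAndI => exact .axAndI
  | axAndE1 => exact .axAndE1
  | axAndE2 => exact .axAndE2
  | axOrI1 => exact .axOrI1
  | axOrI2 => exact .axOrI2
  | axOrE => exact .axOrE
  | axCTop => exact .axCTop
  | axCFix => exact .axCFix
  | axCPrePost => exact .axCPrePost
  | axSaysI => exact .axSaysI
  | axSaysIdem => exact .axSaysIdem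
  | axSaysMono => exact .axSaysMono

theorem pcl_foldr_iff {E A : Type} {Γ : Set (PCLFormula E A)} (l : List (PCLFormula E A)) :
    PCLProof Γ (l.foldr PCLFormula.and .top) ↔ ∀ f ∈ l, PCLProof Γ f := by
  induction l with
  | nil => simp [PCLProof.axTop]
  | cons f l ih =>
    simp only [List.foldr_cons, List.forall_mem_cons, ← ih]
    exact ⟨fun h => ⟨.mp .axAndE1 h, .mp .axAndE2 h⟩, fun h => .mp (.mp .axAndI h.1) h.2⟩

theorem pcl_conjSays_iff (𝒞 : Contract E A) {Γ : Set (PCLFormula E A)} (D : Set E) :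
    PCLProof Γ (conjSays 𝒞 D) ↔ ∀ e ∈ D, PCLProof Γ (.says (𝒞.pi e) (.atom e)) := by
  simp [conjSays, pcl_foldr_iff]

/-- Weaken the configuration's prefix hypotheses one at a time. -/
theorem config_derives (𝒞 : Contract E A) (C : Set E) (l₂ : List E) :
    ∀ l₁ : List E, (∀ e, e ∈ l₁ ++ l₂ ↔ e ∈ C) →
    (∀ m₁ e m₂, l₁ ++ l₂ = m₁ ++ e :: m₂ → 𝒞.en {x | x ∈ m₁} e ∨ 𝒞.cen C e) →
    ∀ Γ : Set (PCLFormula E A), encodeContract 𝒞 ⊆ Γ →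
    (∀ e ∈ l₁, PCLProof Γ (.says (𝒞.pi e) (.atom e))) →
    PCLProof Γ (conjSays 𝒞 C) := by
  induction l₂ with
  | nil =>
    intro l₁ hl _ Γ _ h
    rw [pcl_conjSays_iff]
    intro e he
    exact h e (by simpa using (hl e).2 he)
  | cons e l₂ ih =>
    intro l₁ hl hv Γ hΓ h
    have key : ∀ Δ : Set (PCLFormula E A), Γ ⊆ Δ →
        PCLProof Δ (.says (𝒞.pi e) (.atom e)) → PCLProof Δ (conjSays 𝒞 C) := by
      intro Δ hΔ he
      refine ih (l₁ ++ [e]) (by simpa using hl) (by simpa using hv) Δ (hΓ.trans hΔ) ?_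
      intro d hd
      rcases List.mem_append.1 hd with hd | hd
      · exact pcl_weaken hΔ (h d hd)
      · rw [List.mem_singleton.1 hd]; exact he
    refine key Γ subset_rfl ?_
    rcases hv l₁ e l₂ rfl with hen | hcen
    · have h1 : PCLProof Γ (.says (𝒞.pi e) (.imp (conjSays 𝒞 {x | x ∈ l₁}) (.atom e))) :=
        .hyp (hΓ (Or.inl ⟨_, _, hen, rfl⟩))
      refine .mp (.mp .axSaysMono (pcl_deduction ?_)) h1
      refine .mp (.hyp (Set.mem_insert _ _)) ?_
      rw [pcl_conjSays_iff]
      exact fun d hd => pcl_weaken (Set.subset_insert _ _) (h d hd)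
    · have h1 : PCLProof Γ (.says (𝒞.pi e) (.cimp (conjSays 𝒞 C) (.atom e))) :=
        .hyp (hΓ (Or.inr ⟨_, _, hcen, rfl⟩))
      refine .mp .axSaysIdem (.mp (.mp .axSaysMono (pcl_deduction ?_)) h1)
      have h2 : PCLProof (insert (.cimp (conjSays 𝒞 C) (.atom e)) Γ) (conjSays 𝒞 C) := by
        refine .mp .axCFix (.mp (.mp (.mp .axCPrePost pcl_imp_self)
          (.hyp (Set.mem_insert _ _))) (pcl_deduction ?_))
        refine key _ ((Set.subset_insert _ _).trans (Set.subset_insert _ _)) ?_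
        exact .mp .axSaysI (.hyp (Set.mem_insert _ _))
      exact (pcl_conjSays_iff 𝒞 C).1 h2 e ((hl e).1 (by simp))

/-- Validity of a list with respect to a set of circular assumptions. -/
def ValidList (𝒞 : Contract E A) (X : Set E) (l : List E) : Prop :=
  ∀ m₁ e m₂, l = m₁ ++ e :: m₂ → 𝒞.en {x | x ∈ m₁} e ∨ 𝒞.cen X e

theorem isConfig_iff_valid (𝒞 : Contract E A) (C : Set E) :
    IsConfig 𝒞 C ↔ ∃ l : List E, (∀ e, e ∈ l ↔ e ∈ C) ∧ ValidList 𝒞 C l := by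
  unfold IsConfig
  refine exists_congr fun l => and_congr_right fun _ => ⟨?_, ?_⟩
  · rintro h m₁ e m₂ rfl
    simpa using h ⟨m₁.length, by simp⟩
  · intro h i
    refine h _ _ (l.drop (i.1 + 1)) ?_
    simp

theorem ValidList.append {𝒞 : Contract E A} {X : Set E} {l₁ l₂ : List E}
    (h₁ : ValidList 𝒞 X l₁) (h₂ : ValidList 𝒞 X l₂) : ValidList 𝒞 X (l₁ ++ l₂) := by
  intro m₁ e m₂ h
  rcases List.append_eq_append_iff.1 h with ⟨a, rfl, h3⟩ | ⟨a, h, h'⟩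
  · rcases h₂ _ _ _ h3 with h | h
    · exact Or.inl (𝒞.en_sat _ _ _ h fun x hx => by
        simp only [Set.mem_ofPred_eq, List.mem_append] at hx ⊢; exact Or.inr hx)
    · exact Or.inr h
  · cases a with
    | nil =>
      simp only [List.nil_append] at h'
      rcases h₂ [] _ _ h'.symm with h | h
      · exact Or.inl (𝒞.en_sat _ _ _ h fun x hx => by simp at hx)
      · exact Or.inr h
    | cons b a =>
      simp only [List.cons_append, List.cons.injEq] at h'
      obtain ⟨rfl, -⟩ := h'
      exact h₁ _ _ _ h

/-- Events derivable from circular assumptions `X`. -/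
def stepSet (𝒞 : Contract E A) (X : Set E) : Set E :=
  {e | ∃ l, ValidList 𝒞 X l ∧ e ∈ l}

theorem stepSet_cover (𝒞 : Contract E A) (X : Set E) (L : List E)
    (hL : ∀ e ∈ L, e ∈ stepSet 𝒞 X) : ∃ l, ValidList 𝒞 X l ∧ ∀ e ∈ L, e ∈ l := by
  induction L with
  | nil => exact ⟨[], fun m₁ e m₂ h => by simp at h, by simp⟩
  | cons a L ih =>
    obtain ⟨l, hl, hc⟩ := ih fun e he => hL e (List.mem_cons_of_mem _ he)
    obtain ⟨l', hl', ha⟩ := hL a (by simp)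
    refine ⟨l' ++ l, hl'.append hl, ?_⟩
    intro e he
    rcases List.mem_cons.1 he with rfl | he
    · simp [ha]
    · simp [hc e he]

theorem stepSet_cover_set (𝒞 : Contract E A) (X D : Set E)
    (hD : D ⊆ stepSet 𝒞 X) : ∃ l, ValidList 𝒞 X l ∧ ∀ e ∈ D, e ∈ l := by
  obtain ⟨l, hl, h⟩ := stepSet_cover 𝒞 X (Set.toFinite D).toFinset.toList
    (fun e he => hD (by simpa using he))
  exact ⟨l, hl, fun e he => h e (by simpa using he)⟩

theorem stepSet_en (𝒞 : Contract E A) (X D : Set E) (e : E)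
    (hD : D ⊆ stepSet 𝒞 X) (h : 𝒞.en D e) : e ∈ stepSet 𝒞 X := by
  obtain ⟨l, hl, hc⟩ := stepSet_cover_set 𝒞 X D hD
  refine ⟨l ++ [e], ?_, by simp⟩
  intro m₁ d m₂ hm
  rcases List.eq_nil_or_concat m₂ with rfl | ⟨m, b, rfl⟩
  · obtain ⟨rfl, h2⟩ := List.append_inj' hm rfl
    obtain rfl : e = d := by simpa using h2
    exact Or.inl (𝒞.en_sat _ _ _ h hc)
  · refine hl m₁ d m ?_
    have : l ++ [e] = (m₁ ++ d :: m) ++ [b] := by simpa using hm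
    exact (List.append_inj' this rfl).1

theorem stepSet_cen (𝒞 : Contract E A) (X : Set E) (e : E) (h : 𝒞.cen X e) :
    e ∈ stepSet 𝒞 X := by
  refine ⟨[e], ?_, by simp⟩
  intro m₁ d m₂ hm
  cases m₁ with
  | nil =>
    simp only [List.nil_append, List.cons.injEq] at hm
    exact Or.inr (hm.1 ▸ h)
  | cons b m => simp at hm

theorem stepSet_mono (𝒞 : Contract E A) {X Y : Set E} (h : X ⊆ Y) :
    stepSet 𝒞 X ⊆ stepSet 𝒞 Y := by
  rintro e ⟨l, hl, he⟩
  exact ⟨l, fun m₁ d m₂ hm => (hl m₁ d m₂ hm).imp id fun hc => 𝒞.cen_sat _ _ _ hc h, he⟩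

/-- The descending chain of approximations. -/
def chainSet (𝒞 : Contract E A) : ℕ → Set E
  | 0 => Set.univ
  | n + 1 => stepSet 𝒞 (chainSet 𝒞 n)

theorem chainSet_antitone (𝒞 : Contract E A) : Antitone (chainSet 𝒞) := by
  refine antitone_nat_of_succ_le fun n => ?_
  induction n with
  | zero => exact Set.subset_univ _
  | succ n ih => exact stepSet_mono 𝒞 ih

/-- Kripke forcing: world `n` sees every `m ≤ n`; `φ ↠ ψ` is read as `(ψ → φ) → ψ`. -/
def forces {E A : Type} (X : ℕ → Set E) : PCLFormula E A → ℕ → Prop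
  | .top, _ => True
  | .bot, _ => False
  | .atom e, n => e ∈ X n
  | .and φ ψ, n => forces X φ n ∧ forces X ψ n
  | .or φ ψ, n => forces X φ n ∨ forces X ψ n
  | .imp φ ψ, n => ∀ m ≤ n, forces X φ m → forces X ψ m
  | .cimp φ ψ, n => ∀ m ≤ n, (∀ k ≤ m, forces X ψ k → forces X φ k) → forces X ψ m
  | .says _ φ, n => forces X φ n

theorem forces_mono {E A : Type} {X : ℕ → Set E} (hX : Antitone X) (φ : PCLFormula E A) :
    ∀ {n m : ℕ}, m ≤ n → forces X φ n → forces X φ m := by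
  induction φ with
  | top => intros; trivial
  | bot => intro n m _ h; exact h
  | atom e => intro n m h he; exact hX h he
  | and φ ψ h1 h2 => intro n m h he; exact ⟨h1 h he.1, h2 h he.2⟩
  | or φ ψ h1 h2 => intro n m h he; exact he.imp (h1 h) (h2 h)
  | imp φ ψ _ _ => intro n m h he k hk; exact he k (hk.trans h)
  | cimp φ ψ _ _ => intro n m h he k hk; exact he k (hk.trans h)
  | _ =>
    rename_i a φ h1
    intro n m h he
    exact h1 (n := n) h he

theorem forces_sound {E A : Type} {X : ℕ → Set E} (hX : Antitone X)
    {Γ : Set (PCLFormula E A)} (hΓ : ∀ f ∈ Γ, ∀ n, forces X f n) {φ : PCLFormula E A}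
    (h : PCLProof Γ φ) : ∀ n, forces X φ n := by
  induction h with
  | hyp h => exact hΓ _ h
  | mp _ _ h1 h2 => exact fun n => h1 n n le_rfl (h2 n)
  | axK => exact fun n m _ h k hk _ => forces_mono hX _ hk h
  | axS => exact fun n m _ h k hk h' j hj h'' => h j (hj.trans hk) h'' j le_rfl (h' j hj h'')
  | axTop => exact fun n => trivial
  | axBot => exact fun n m _ h => h.elim
  | axAndI => exact fun n m _ h k hk h' => ⟨forces_mono hX _ hk h, h'⟩
  | axAndE1 => exact fun n m _ h => h.1
  | axAndE2 => exact fun n m _ h => h.2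
  | axOrI1 => exact fun n m _ h => Or.inl h
  | axOrI2 => exact fun n m _ h => Or.inr h
  | axOrE => exact fun n m _ h k hk h' j hj h'' => h''.elim (h j (hj.trans hk)) (h' j hj)
  | axCTop => exact fun n m _ _ => trivial
  | axCFix => exact fun n m _ h => h m le_rfl fun k _ hk => hk
  | axCPrePost =>
    intro n m _ h k hk h' j hj h'' i hi g
    refine h'' i hi (h' i (hi.trans hj) fun p hp hψ => ?_)
    exact h p (hp.trans (hi.trans (hj.trans hk))) (g p hp (h'' p (hp.trans hi) hψ))
  | axSaysI => exact fun n m _ h => h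
  | axSaysIdem => exact fun n m _ h => h
  | axSaysMono => exact fun n m _ h k hk h' => h k hk h'

theorem forces_conjSays (𝒞 : Contract E A) (X : ℕ → Set E) (D : Set E) (n : ℕ) :
    forces X (conjSays 𝒞 D) n ↔ D ⊆ X n := by
  have key : ∀ L : List E, forces X ((L.map
      (fun d => PCLFormula.says (𝒞.pi d) (.atom d))).foldr PCLFormula.and .top) n ↔
      ∀ e ∈ L, e ∈ X n := by
    intro L
    induction L with
    | nil => simp [forces]
    | cons a L ih => simp [forces, ih]
  unfold conjSays
  rw [key]
  simp [Set.subset_def]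

theorem chain_cen (𝒞 : Contract E A) (D : Set E) (e : E) (h : 𝒞.cen D e) (n : ℕ)
    (hn : ∀ k ≤ n, e ∈ chainSet 𝒞 k → D ⊆ chainSet 𝒞 k) : e ∈ chainSet 𝒞 n := by
  induction n with
  | zero => trivial
  | succ n ih =>
    have h1 := ih fun k hk => hn k (hk.trans (Nat.le_succ n))
    exact stepSet_cen 𝒞 _ e (𝒞.cen_sat _ _ _ h (hn n (Nat.le_succ n) h1))

theorem chain_forces (𝒞 : Contract E A) :
    ∀ f ∈ encodeContract 𝒞, ∀ n, forces (chainSet 𝒞) f n := by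
  rintro f (⟨D, e, h, rfl⟩ | ⟨D, e, h, rfl⟩) n
  · intro m _ hD
    rw [forces_conjSays] at hD
    cases m with
    | zero => trivial
    | succ m => exact stepSet_en 𝒞 _ D e hD h
  · intro m _ hD
    simp only [forces_conjSays] at hD
    exact chain_cen 𝒞 D e h m hD

theorem chain_config (𝒞 : Contract E A) :
    ∃ N, IsConfig 𝒞 (chainSet 𝒞 N) := by
  obtain ⟨N, hN⟩ := WellFoundedGT.monotone_chain_condition (α := (Set E)ᵒᵈ)
    ⟨fun n => OrderDual.toDual (chainSet 𝒞 n), fun a b h => chainSet_antitone 𝒞 h⟩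
  have hfix : chainSet 𝒞 N = stepSet 𝒞 (chainSet 𝒞 N) := hN (N + 1) (Nat.le_succ N)
  refine ⟨N, (isConfig_iff_valid 𝒞 _).2 ?_⟩
  obtain ⟨l, hl, hc⟩ := stepSet_cover_set 𝒞 (chainSet 𝒞 N) (chainSet 𝒞 N) hfix.le
  refine ⟨l, fun e => ⟨fun he => ?_, hc e⟩, hl⟩
  rw [hfix]
  exact ⟨l, hl, he⟩

/-- A contract admits an agreement iff every participant has a goal `G` all of
whose events `e` satisfy `[𝒞] ⊢_PCL π(e) says e`. -/
theorem agreement_iff_pcl (𝒞 : Contract E A) :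
    (∃ C, Agreement 𝒞 C) ↔
      ∀ a : A, ∃ G : Set E, 𝒞.ok a G ∧
        ∀ e ∈ G, PCLProof (encodeContract 𝒞) (.says (𝒞.pi e) (.atom e)) := by
  constructor
  · rintro ⟨C, hC, hok⟩ a
    refine ⟨C, hok a, (pcl_conjSays_iff 𝒞 C).1 ?_⟩
    obtain ⟨l, hl, hv⟩ := (isConfig_iff_valid 𝒞 C).1 hC
    exact config_derives 𝒞 C l [] (by simpa using hl) (by simpa [ValidList] using hv) _ subset_rfl (by simp)
  · intro h
    obtain ⟨N, hN⟩ := chain_config 𝒞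
    refine ⟨_, hN, fun a => ?_⟩
    obtain ⟨G, hG, hp⟩ := h a
    refine 𝒞.ok_sat a G _ hG fun e he => ?_
    exact forces_sound (chainSet_antitone 𝒞) (chain_forces 𝒞) (hp e he) N
end

section
/- A contract 𝒞 admits an agreement if and only if for every participant A ∈ 𝒜 there exists a set G ⊆ E such that ok(A,G) and G is contained in the set of all reachable events of 𝒞. -/
variable {E A : Type} [Fintype E] [Fintype A]

theorem isConfig_union (𝒞 : Contract E A) {C D : Set E} (hC : IsConfig 𝒞 C)
    (hD : IsConfig 𝒞 D) : IsConfig 𝒞 (C ∪ D) := by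
  obtain ⟨l, hl, h1⟩ := hC
  obtain ⟨m, hm, h2⟩ := hD
  refine ⟨l ++ m, fun e => by simp [hl, hm], ?_⟩
  rintro ⟨i, hi⟩
  by_cases hil : i < l.length
  · have h := h1 ⟨i, hil⟩
    simp only [List.get_eq_getElem] at h ⊢
    rw [List.getElem_append_left hil]
    rcases h with h | h
    · left
      refine 𝒞.en_sat _ _ _ h ?_
      intro e he
      simp only [Set.mem_setOf_eq, List.take_append, List.mem_append] at he ⊢
      exact Or.inl he
    · right
      exact 𝒞.cen_sat _ _ _ h Set.subset_union_left
  · have hil' : l.length ≤ i := Nat.le_of_not_lt hil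
    have him : i - l.length < m.length := by
      rw [List.length_append] at hi; omega
    have h := h2 ⟨i - l.length, him⟩
    simp only [List.get_eq_getElem] at h ⊢
    rw [List.getElem_append_right hil']
    rcases h with h | h
    · left
      refine 𝒞.en_sat _ _ _ h ?_
      intro e he
      simp only [Set.mem_setOf_eq, List.take_append, List.mem_append] at he ⊢
      exact Or.inr he
    · right
      exact 𝒞.cen_sat _ _ _ h Set.subset_union_right

theorem isConfig_sUnion (𝒞 : Contract E A) (S : Set (Set E)) (hS : S.Finite)
    (h : ∀ C ∈ S, IsConfig 𝒞 C) : IsConfig 𝒞 (⋃₀ S) := by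
  induction S, hS using Set.Finite.induction_on with
  | empty => exact ⟨[], by simp, fun i => i.elim0⟩
  | insert _ _ ih =>
    rw [Set.sUnion_insert]
    exact isConfig_union 𝒞 (h _ (Set.mem_insert _ _))
      (ih fun C hC => h C (Set.mem_insert_of_mem _ hC))

/-- A contract admits an agreement iff every participant has a goal `G`
contained in the set of all reachable events. -/
theorem agreement_iff_reachable_goals (𝒞 : Contract E A) :
    (∃ C, Agreement 𝒞 C) ↔
      ∀ a : A, ∃ G : Set E, 𝒞.ok a G ∧ G ⊆ {e | Reachable 𝒞 e} := by
  constructor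
  · rintro ⟨C, hC, hok⟩ a
    exact ⟨C, hok a, fun e he => ⟨C, hC, he⟩⟩
  · intro h
    refine ⟨⋃₀ {C | IsConfig 𝒞 C}, isConfig_sUnion 𝒞 _ (Set.toFinite _) fun C hC => hC, ?_⟩
    intro a
    obtain ⟨G, hG, hsub⟩ := h a
    refine 𝒞.ok_sat a G _ hG fun e he => ?_
    obtain ⟨C, hC, heC⟩ := hsub he
    exact ⟨C, hC, heC⟩
end
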